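/- Let 0 ≤ β < 4, let τ > 0 and σ > 0 be constants, and let α > 32π²(1 − β/4). Then for every M > 0 there exists a smooth compactly supported function u : ℝ⁴ → ℝ with ∫_{ℝ⁴}(|Δu|² + τ|∇u|² + σ u²) dx ≤ 1 and ∫_{ℝ⁴} (e^{α u²} − 1)/|x|^β dx > M; that is, the supremum of ∫_{ℝ⁴}(e^{α u²} − 1)/|x|^β dx over all such u is +∞. -/

import Mathlib

/-! The test functions are a smooth version of the truncated logarithm,
`u = c Φ(-½ log (|x|² + d))` with `d = e^{-2L}`, where `Φ` is a smooth ramp (zero on the negative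
half-line, the identity beyond `1`), so that `u` is smooth and supported in the unit ball.

In dimension four `Δ(-½ log (|x|² + d)) = -(2|x|² + 4d) / (|x|² + d)²`, whose square is
`4/y² + 8d/y³ + 4d²/y⁴` with `y = |x|² + d`. All other contributions to the energy density (the
transition zone of `Φ`, the gradient, the function itself) are at most `K / y` with `K` independent
of `d` (`density_le`). Integrating in polar coordinates with sphere area `2π²`, only `4/y²`
contributes to the leading order, and the energy of the unnormalized function is at most
`8π² L + C` (`lintegral_majorant_le`). The choice `c = (8π² L + C)^{-1/2}` makes the energy of `u`
at most one.

On the ball of radius `e^{-L}` one has `u² ≥ (L - 1)² / (8π² L + C)`, which is asymptotic to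
`L / (8π²)`, while `|x|^{-β} ≥ e^{βL}` and the volume is `(π²/2) e^{-4L}`. Hence the weighted
exponential integral tends to infinity with `L` because `α / (8π²) > 4 - β`, which is
the hypothesis `α > 32π² (1 - β/4)` (`exists_large`). -/

open MeasureTheory Real Filter Topology ENNReal

noncomputable section

/-- Four-dimensional Euclidean space with Lebesgue measure. -/
abbrev R4 : Type := EuclideanSpace ℝ (Fin 4)

/-- The Laplacian of `u : ℝ⁴ → ℝ`, as the sum of the pure second derivatives
along the coordinate directions. -/
noncomputable def lapl (u : R4 → ℝ) (x : R4) : ℝ :=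
  ∑ i : Fin 4, iteratedFDeriv ℝ 2 u x ![EuclideanSpace.single i 1, EuclideanSpace.single i 1]

/-! ### A smooth ramp -/

/-- A smooth ramp `Φ`, with its first two derivatives `Φ1`, `Φ2`: it vanishes on `t < 0`, is the
identity on `t > 1`, and its derivatives are bounded by `B` on the transition interval. -/
lemma exists_smooth_ramp : ∃ (Φ Φ1 Φ2 : ℝ → ℝ) (B : ℝ), 1 ≤ B ∧ ContDiff ℝ (⊤ : ℕ∞) Φ ∧
    (∀ t, HasDerivAt Φ (Φ1 t) t) ∧ (∀ t, HasDerivAt Φ1 (Φ2 t) t) ∧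
    (∀ t < 0, Φ t = 0 ∧ Φ1 t = 0 ∧ Φ2 t = 0) ∧
    (∀ t, 1 < t → Φ t = t ∧ Φ1 t = 1 ∧ Φ2 t = 0) ∧
    (∀ t, |Φ t| ≤ |t|) ∧
    (∀ t, 0 ≤ t → t ≤ 1 → |Φ1 t| ≤ B ∧ |Φ2 t| ≤ B) := by
  set Φ : ℝ → ℝ := fun t => t * Real.smoothTransition t with hΦ
  have hc : ContDiff ℝ (⊤ : ℕ∞) Φ := contDiff_id.mul Real.smoothTransition.contDiff
  have hc1 : ContDiff ℝ (⊤ : ℕ∞) (deriv Φ) := (contDiff_infty_iff_deriv.1 hc).2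
  have hc2 : ContDiff ℝ (⊤ : ℕ∞) (deriv (deriv Φ)) := (contDiff_infty_iff_deriv.1 hc1).2
  have hneg : ∀ t < 0, Φ =ᶠ[𝓝 t] fun _ => 0 := by
    intro t ht
    filter_upwards [Iio_mem_nhds ht] with s hs
    simp [hΦ, Real.smoothTransition.zero_of_nonpos (le_of_lt hs)]
  have hpos : ∀ t, 1 < t → Φ =ᶠ[𝓝 t] fun s => s := by
    intro t ht
    filter_upwards [Ioi_mem_nhds ht] with s hs
    simp [hΦ, Real.smoothTransition.one_of_one_le (le_of_lt hs)]
  obtain ⟨B1, hB1⟩ := (isCompact_Icc (a := (0:ℝ)) (b := 1)).exists_bound_of_continuousOn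
    hc1.continuous.continuousOn
  obtain ⟨B2, hB2⟩ := (isCompact_Icc (a := (0:ℝ)) (b := 1)).exists_bound_of_continuousOn
    hc2.continuous.continuousOn
  refine ⟨Φ, deriv Φ, deriv (deriv Φ), max 1 (max B1 B2), le_max_left _ _, hc,
    fun t => (hc.differentiable (by simp)).differentiableAt.hasDerivAt,
    fun t => (hc1.differentiable (by simp)).differentiableAt.hasDerivAt, ?_, ?_, ?_, ?_⟩
  · intro t ht
    have h := hneg t ht
    refine ⟨h.eq_of_nhds, ?_, ?_⟩
    · simpa using h.deriv.eq_of_nhds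
    · simpa using h.deriv.deriv.eq_of_nhds
  · intro t ht
    have h := hpos t ht
    refine ⟨h.eq_of_nhds, ?_, ?_⟩
    · simpa using h.deriv.eq_of_nhds
    · simpa using h.deriv.deriv.eq_of_nhds
  · intro t
    simp only [hΦ, abs_mul, abs_of_nonneg (Real.smoothTransition.nonneg t)]
    exact mul_le_of_le_one_right (abs_nonneg t) (Real.smoothTransition.le_one t)
  · intro t h0 h1
    exact ⟨(hB1 t ⟨h0, h1⟩).trans ((le_max_left _ _).trans (le_max_right _ _)),
      (hB2 t ⟨h0, h1⟩).trans ((le_max_right _ _).trans (le_max_right _ _))⟩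

/-! ### Radial functions on `ℝ⁴` -/

lemma hasFDerivAt_radial {F F1 : ℝ → ℝ} (h1 : ∀ s, 0 ≤ s → HasDerivAt F (F1 s) s) (x : R4) :
    HasFDerivAt (fun x : R4 => F (‖x‖ ^ 2)) ((2 * F1 (‖x‖ ^ 2)) • innerSL ℝ x) x := by
  have h := (h1 (‖x‖ ^ 2) (by positivity)).comp_hasFDerivAt x (hasStrictFDerivAt_norm_sq x).hasFDerivAt
  refine h.congr_fderiv ?_
  ext v
  simp
  ring

lemma norm_gradient_radial {F F1 : ℝ → ℝ} (h1 : ∀ s, 0 ≤ s → HasDerivAt F (F1 s) s) (x : R4) :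
    ‖gradient (fun x : R4 => F (‖x‖ ^ 2)) x‖ ^ 2 = 4 * ‖x‖ ^ 2 * F1 (‖x‖ ^ 2) ^ 2 := by
  have h : HasGradientAt (fun x : R4 => F (‖x‖ ^ 2)) ((2 * F1 (‖x‖ ^ 2)) • x) x := by
    rw [hasGradientAt_iff_hasFDerivAt]
    refine (hasFDerivAt_radial h1 x).congr_fderiv ?_
    ext v
    simp
  rw [h.gradient, norm_smul, mul_pow, Real.norm_eq_abs, sq_abs]
  ring

/-- In dimension four, `Δ (F (|x|²)) = 4 |x|² F''(|x|²) + 8 F'(|x|²)`. -/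
lemma lapl_radial {F F1 F2 : ℝ → ℝ} (h1 : ∀ s, 0 ≤ s → HasDerivAt F (F1 s) s)
    (h2 : ∀ s, 0 ≤ s → HasDerivAt F1 (F2 s) s) (x : R4) :
    lapl (fun x : R4 => F (‖x‖ ^ 2)) x = 4 * ‖x‖ ^ 2 * F2 (‖x‖ ^ 2) + 8 * F1 (‖x‖ ^ 2) := by
  have e1 : fderiv ℝ (fun x : R4 => F (‖x‖ ^ 2)) =
      fun x : R4 => (2 * F1 (‖x‖ ^ 2)) • innerSL ℝ x := by
    funext y
    exact (hasFDerivAt_radial h1 y).fderiv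
  -- Over `ℝ` the inner product is linear in its first argument as well, not only conjugate-linear.
  let A : R4 →L[ℝ] R4 →L[ℝ] ℝ := innerSL ℝ
  have hA : ∀ v w, A v w = inner ℝ v w := fun _ _ => rfl
  have e2 : HasFDerivAt (fun y : R4 => (2 * F1 (‖y‖ ^ 2)) • innerSL ℝ y) _ x :=
    ((hasFDerivAt_radial h2 x).const_mul 2).smul A.hasFDerivAt
  have hn : ‖x‖ ^ 2 = ∑ i, x i ^ 2 := by
    rw [EuclideanSpace.norm_sq_eq]; simp
  unfold lapl
  simp only [iteratedFDeriv_two_apply]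
  rw [e1, e2.fderiv]
  simp only [Matrix.cons_val_zero, Matrix.cons_val_one]
  refine (Finset.sum_congr rfl (g := fun i => 2 * F1 (‖x‖ ^ 2) + 4 * F2 (‖x‖ ^ 2) * x i ^ 2)
    fun i _ => ?_).trans ?_
  · simp [hA, EuclideanSpace.inner_single_right]
    ring
  · rw [Finset.sum_add_distrib, ← Finset.mul_sum Finset.univ (fun i => x i ^ 2), ← hn]
    simp
    ring

lemma finrank_R4 : Module.finrank ℝ R4 = 4 := by simp

lemma volume_ball_R4 (r : ℝ) (hr : 0 ≤ r) :
    volume (Metric.ball (0 : R4) r) = ENNReal.ofReal (r ^ 4 * (π ^ 2 / 2)) := by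
  rw [InnerProductSpace.volume_ball_of_dim_even (k := 2) (by simp), finrank_R4,
    ← ENNReal.ofReal_pow hr, ← ENNReal.ofReal_mul (by positivity)]
  simp

/-! ### Energy estimate -/

/-- Upper bound for the energy density of the unnormalized test function, as a function of
`y = |x|² + d`. The first three terms are `(Δ (-½ log (|x|² + d)))²`; the term `K / y` absorbs the
transition region of the ramp, the gradient and the function itself. -/
def majorant (K d y : ℝ) : ℝ := 4 / y ^ 2 + 8 * d / y ^ 3 + 4 * d ^ 2 / y ^ 4 + K / y

/-- Pointwise energy bound in the unit region `y ≤ 1`. Here `y = |x|² + d`, `s = |x|²`,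
`t = -½ log y`, and `f`, `a`, `b` stand for the values at `t` of the ramp and of its first and second
derivatives, so that the first square is `|Δ|²` and `s a² / y²` is `|∇|²`. -/
lemma density_le {τ σ B d s y t a b f : ℝ} (hτ : 0 < τ) (hσ : 0 < σ) (hB : 1 ≤ B)
    (hd : 0 < d) (hs : 0 ≤ s) (hy : y = s + d) (hy1 : y ≤ 1) (ht : t = -(1 / 2) * Real.log y)
    (h1 : 1 < t → a = 1 ∧ b = 0) (h2 : t ≤ 1 → |a| ≤ B ∧ |b| ≤ B) (hf : |f| ≤ |t|) :
    (s * (b + 2 * a) / y ^ 2 - 4 * a / y) ^ 2 + τ * (s * a ^ 2 / y ^ 2) + σ * f ^ 2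
      ≤ majorant (49 * B ^ 2 * exp 2 + τ * B ^ 2 + σ) d y := by
  have hy0 : 0 < y := by linarith
  have ht0 : 0 ≤ t := by
    have := Real.log_nonpos hy0.le hy1
    rw [ht]; linarith
  have hyt : 1 / y = exp (2 * t) := by
    rw [ht, show 2 * (-(1 / 2) * Real.log y) = - Real.log y by ring, Real.exp_neg, Real.exp_log hy0, one_div]
  have hf2 : f ^ 2 ≤ 1 / y := by
    rw [hyt, two_mul, Real.exp_add, ← sq]
    have h3 : t ≤ exp t := by linarith [Real.add_one_le_exp t]
    calc f ^ 2 ≤ t ^ 2 := sq_le_sq.2 hf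
      _ ≤ _ := by gcongr
  have ha : |a| ≤ B := by
    rcases lt_or_ge 1 t with h | h
    · rw [(h1 h).1]; simpa using hB
    · exact (h2 h).1
  have ha2 : a ^ 2 ≤ B ^ 2 := sq_le_sq.2 (ha.trans (le_abs_self B))
  have hg : s * a ^ 2 / y ^ 2 ≤ B ^ 2 * (1 / y) := by
    calc s * a ^ 2 / y ^ 2 ≤ y * B ^ 2 / y ^ 2 := by gcongr; linarith
      _ = _ := by field_simp
  have hΔ : (s * (b + 2 * a) / y ^ 2 - 4 * a / y) ^ 2
      ≤ 4 / y ^ 2 + 8 * d / y ^ 3 + 4 * d ^ 2 / y ^ 4 + 49 * B ^ 2 * exp 2 * (1 / y) := by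
    rcases lt_or_ge 1 t with h | h
    · obtain ⟨rfl, rfl⟩ := h1 h
      have : (s * (0 + 2 * 1) / y ^ 2 - 4 * 1 / y) ^ 2
          = 4 / y ^ 2 + 8 * d / y ^ 3 + 4 * d ^ 2 / y ^ 4 := by
        have : s = y - d := by linarith
        rw [this]; field_simp; ring
      rw [this]
      have : 0 ≤ 49 * B ^ 2 * exp 2 * (1 / y) := by positivity
      linarith
    · have hb := (h2 h).2
      have habs : |s * (b + 2 * a) / y ^ 2 - 4 * a / y| ≤ 7 * B / y := by
        have e1 : |s * (b + 2 * a) / y ^ 2| ≤ 3 * B / y := by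
          rw [abs_div, abs_mul, abs_of_nonneg hs, abs_of_nonneg (by positivity : 0 ≤ y ^ 2)]
          have : |b + 2 * a| ≤ 3 * B := by
            rw [abs_le] at *
            constructor <;> linarith [ha.1, ha.2, hb.1, hb.2]
          calc s * |b + 2 * a| / y ^ 2 ≤ y * (3 * B) / y ^ 2 := by gcongr; linarith
            _ = _ := by field_simp
        have e2 : |4 * a / y| ≤ 4 * B / y := by
          rw [abs_div, abs_mul, abs_of_pos hy0, abs_of_pos (by norm_num : (0:ℝ) < 4)]
          gcongr
        calc _ ≤ _ := abs_sub _ _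
          _ ≤ 3 * B / y + 4 * B / y := add_le_add e1 e2
          _ = _ := by ring
      -- On the transition interval `y` is bounded below, so `1 / y²` is controlled by `1 / y`.
      have hle : 1 / y ≤ exp 2 := by
        rw [hyt]; gcongr; linarith
      have : (s * (b + 2 * a) / y ^ 2 - 4 * a / y) ^ 2 ≤ 49 * B ^ 2 * exp 2 * (1 / y) := by
        calc _ ≤ (7 * B / y) ^ 2 := sq_le_sq.2 (habs.trans (le_abs_self _))
          _ = 49 * B ^ 2 * (1 / y) * (1 / y) := by field_simp; ring
          _ ≤ 49 * B ^ 2 * exp 2 * (1 / y) := by gcongr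
      have : 0 ≤ 4 / y ^ 2 + 8 * d / y ^ 3 + 4 * d ^ 2 / y ^ 4 := by positivity
      linarith
  have e3 := mul_le_mul_of_nonneg_left hg hτ.le
  have e4 := mul_le_mul_of_nonneg_left hf2 hσ.le
  have e5 : majorant (49 * B ^ 2 * exp 2 + τ * B ^ 2 + σ) d y
    = 4 / y ^ 2 + 8 * d / y ^ 3 + 4 * d ^ 2 / y ^ 4 + 49 * B ^ 2 * exp 2 * (1 / y)
      + τ * (B ^ 2 * (1 / y)) + σ * (1 / y) := by unfold majorant; ring
  rw [e5]
  linarith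

/-- The radial integral of the majorant is at most `2 log (1/d) + O(1)`. Replacing `r³` by
`r (r² + d)` makes the integrand an exact derivative and costs only `O(1)`. -/
lemma interval_majorant_le {K d : ℝ} (hK : 0 ≤ K) (hd : 0 < d) (hd1 : d ≤ 1) :
    ∫ r in (0:ℝ)..1, r ^ 3 * majorant K d (r ^ 2 + d) ≤ -2 * Real.log d + 7 + K / 2 := by
  have hy : ∀ r : ℝ, 0 < r ^ 2 + d := fun r => by positivity
  have hcont : Continuous fun r : ℝ => majorant K d (r ^ 2 + d) := by
    unfold majorant
    fun_prop (disch := exact fun r => by have := hy r; positivity)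
  -- `G` is a primitive of `r (r² + d) * majorant K d (r² + d)`.
  let G : ℝ → ℝ := fun r => 2 * Real.log (r ^ 2 + d) - 4 * d / (r ^ 2 + d) - d ^ 2 / (r ^ 2 + d) ^ 2
    + K / 2 * (r ^ 2 + d)
  have hG : ∀ r, HasDerivAt G (r * (r ^ 2 + d) * majorant K d (r ^ 2 + d)) r := by
    intro r
    have h0 : HasDerivAt (fun r : ℝ => r ^ 2 + d) (2 * r) r := by
      simpa using (hasDerivAt_pow 2 r).add_const d
    have hne := (hy r).ne'
    have := (((h0.log hne).const_mul 2).sub ((hasDerivAt_const r (4 * d)).div h0 hne)).sub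
      ((hasDerivAt_const r (d ^ 2)).div (h0.pow 2) (pow_ne_zero 2 hne)) |>.add (h0.const_mul (K / 2))
    refine HasDerivAt.congr_deriv (f := G) this ?_
    unfold majorant
    simp
    field_simp
    ring
  calc ∫ r in (0:ℝ)..1, r ^ 3 * majorant K d (r ^ 2 + d)
      ≤ ∫ r in (0:ℝ)..1, r * (r ^ 2 + d) * majorant K d (r ^ 2 + d) := by
        apply intervalIntegral.integral_mono_on zero_le_one
        · exact Continuous.intervalIntegrable (by fun_prop) _ _
        · exact Continuous.intervalIntegrable (by fun_prop) _ _
        · intro r hr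
          have h0 : 0 ≤ majorant K d (r ^ 2 + d) := by
            have := hy r
            unfold majorant; positivity
          gcongr
          nlinarith [hr.1]
    _ = G 1 - G 0 := intervalIntegral.integral_eq_sub_of_hasDerivAt (fun r _ => hG r)
        (Continuous.intervalIntegrable (by fun_prop) _ _)
    _ ≤ _ := by
        have e0 : G 0 = 2 * Real.log d - 5 + K / 2 * d := by
          simp only [G]; field_simp; ring_nf
        have e1 : G 1 ≤ 2 * Real.log (1 + d) + K / 2 * (1 + d) := by
          have h1 : 0 ≤ 4 * d / (1 ^ 2 + d) := by positivity
          have h2 : 0 ≤ d ^ 2 / (1 ^ 2 + d) ^ 2 := by positivity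
          simp only [G]
          norm_num at h1 h2 ⊢
          linarith
        have e2 : Real.log (1 + d) ≤ 1 := by
          have := Real.log_le_sub_one_of_pos (show 0 < 1 + d by linarith)
          linarith
        linarith

lemma lintegral_majorant_le {K d : ℝ} (hK : 0 ≤ K) (hd : 0 < d) (hd1 : d ≤ 1) :
    ∫⁻ x : R4, ENNReal.ofReal ((Set.Iic 1).indicator (fun r => majorant K d (r ^ 2 + d)) ‖x‖)
      ≤ ENNReal.ofReal (2 * π ^ 2 * (-2 * Real.log d + 7 + K / 2)) := by
  have hy : ∀ r : ℝ, 0 < r ^ 2 + d := fun r => by positivity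
  have hcont : Continuous fun r : ℝ => majorant K d (r ^ 2 + d) := by
    unfold majorant
    fun_prop (disch := exact fun r => by have := hy r; positivity)
  have hnn : ∀ r : ℝ, 0 ≤ majorant K d (r ^ 2 + d) := by
    intro r
    have := hy r
    unfold majorant; positivity
  have hint : Integrable (fun x : R4 =>
      (Set.Iic 1).indicator (fun r => majorant K d (r ^ 2 + d)) ‖x‖) := by
    have h := (hcont.comp (continuous_norm (E := R4))).continuousOn.integrableOn_compact
      (isCompact_closedBall (0 : R4) 1) (μ := volume)
    rw [← integrable_indicator_iff Metric.isClosed_closedBall.measurableSet] at h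
    refine h.congr (.of_forall fun x => ?_)
    simp [Set.indicator]
  rw [← ofReal_integral_eq_lintegral_ofReal hint
    (.of_forall fun x => Set.indicator_nonneg (fun r _ => hnn r) _)]
  apply ENNReal.ofReal_le_ofReal
  rw [integral_fun_norm_addHaar volume
    ((Set.Iic (1:ℝ)).indicator (fun r => majorant K d (r ^ 2 + d))), finrank_R4]
  have hv : (volume : Measure R4).real (Metric.ball 0 1) = π ^ 2 / 2 := by
    rw [Measure.real, volume_ball_R4 1 zero_le_one, ENNReal.toReal_ofReal (by positivity)]
    ring
  have hI : ∫ y in Set.Ioi (0:ℝ), y ^ (4 - 1) •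
      (Set.Iic (1:ℝ)).indicator (fun r => majorant K d (r ^ 2 + d)) y
      = ∫ r in (0:ℝ)..1, r ^ 3 * majorant K d (r ^ 2 + d) := by
    rw [intervalIntegral.integral_of_le zero_le_one, ← Set.Ioi_inter_Iic,
      ← setIntegral_indicator measurableSet_Iic]
    refine setIntegral_congr_fun measurableSet_Ioi fun r _ => ?_
    simp only [Set.indicator]
    split_ifs <;> simp
  rw [hI, hv, nsmul_eq_mul, smul_eq_mul]
  have := mul_le_mul_of_nonneg_left (interval_majorant_le hK hd hd1)
    (by positivity : 0 ≤ 2 * π ^ 2)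
  calc _ = 2 * π ^ 2 * ∫ r in (0:ℝ)..1, r ^ 3 * majorant K d (r ^ 2 + d) := by push_cast; ring
    _ ≤ _ := this

/-! ### Divergence and the sharpness statement -/

/-- Supercriticality of `α`: since `α / (8π²) > 4 - β`, the exponent `α (L - 1)² / (8π² L + C)`
eventually exceeds `γ L` for some `γ > 4 - β`, which beats the factor `e^{-(4 - β) L}` coming from the
weighted volume of the ball of radius `e^{-L}`. -/
lemma exists_large {α β C M : ℝ} (hβ4 : β < 4) (hC : 0 < C)
    (hα : 32 * π ^ 2 * (1 - β / 4) < α) :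
    ∃ L : ℝ, 3 ≤ L ∧
      M < (exp (α * ((L - 1) ^ 2 / (8 * π ^ 2 * L + C))) - 1) * exp (β * L)
        * (exp (-L) ^ 4 * (π ^ 2 / 2)) := by
  have hp : 0 < 8 * π ^ 2 := by positivity
  have hα0 : 0 < α := by
    have : 0 < 1 - β / 4 := by linarith
    exact lt_trans (by positivity) hα
  have hlt : 4 - β < α / (8 * π ^ 2) := by
    rw [lt_div_iff₀ hp]; nlinarith
  obtain ⟨γ, hγ1, hγ2⟩ := exists_between hlt
  have hγα : γ * (8 * π ^ 2) < α := by rwa [lt_div_iff₀ hp] at hγ2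
  have ev1 : ∀ᶠ L : ℝ in atTop, γ * L * (8 * π ^ 2 * L + C) ≤ α * (L - 1) ^ 2 := by
    have h := (tendsto_id (α := ℝ) (x := atTop)).const_mul_atTop (sub_pos.2 hγα)
    filter_upwards [h.eventually_ge_atTop (γ * C + 2 * α), eventually_ge_atTop 0] with L h1 h2
    simp only [id] at h1
    nlinarith [mul_le_mul_of_nonneg_right h1 h2]
  have hδ : 0 < γ - (4 - β) := sub_pos.2 hγ1
  have ev2 : ∀ᶠ L : ℝ in atTop, 2 / π ^ 2 * M + 1 < exp ((γ - (4 - β)) * L) :=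
    (Real.tendsto_exp_atTop.comp
      ((tendsto_id (α := ℝ) (x := atTop)).const_mul_atTop hδ)).eventually_gt_atTop _
  obtain ⟨L, h1, h2, h3⟩ := (ev1.and (ev2.and (eventually_ge_atTop 3))).exists
  refine ⟨L, h3, ?_⟩
  have hden : 0 < 8 * π ^ 2 * L + C := by positivity
  have h4 : γ * L ≤ α * ((L - 1) ^ 2 / (8 * π ^ 2 * L + C)) := by
    rw [← mul_div_assoc, le_div_iff₀ hden]; exact h1
  have h5 : exp (-((4 - β) * L)) ≤ 1 := Real.exp_le_one_iff.2 (by nlinarith)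
  calc M = (2 / π ^ 2 * M + 1 - 1) * (π ^ 2 / 2) := by field_simp; ring
    _ < (exp ((γ - (4 - β)) * L) - exp (-((4 - β) * L))) * (π ^ 2 / 2) := by
        have : 0 < π ^ 2 / 2 := by positivity
        apply mul_lt_mul_of_pos_right _ this
        linarith
    _ = (exp (γ * L) - 1) * exp (β * L) * (exp (-L) ^ 4 * (π ^ 2 / 2)) := by
        have e1 : exp ((γ - (4 - β)) * L) = exp (γ * L) * exp (β * L) * exp (-L) ^ 4 := by
          rw [← Real.exp_nat_mul, ← Real.exp_add, ← Real.exp_add]; congr 1; push_cast; ring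
        have e2 : exp (-((4 - β) * L)) = exp (β * L) * exp (-L) ^ 4 := by
          rw [← Real.exp_nat_mul, ← Real.exp_add]; congr 1; push_cast; ring
        rw [e1, e2]; ring
    _ ≤ _ := by gcongr

/-- Theorem 1.1 (sharpness): for `0 ≤ β < 4`, `τ, σ > 0` and `α > 32π²(1 − β/4)`, for every
`M > 0` there is a smooth compactly supported `u` with `∫(|Δu|² + τ|∇u|² + σu²) dx ≤ 1` and
`∫ (e^{αu²} − 1)/|x|^β dx > M`. -/
theorem stmt_5 (β τ σ α : ℝ) (hβ0 : 0 ≤ β) (hβ4 : β < 4) (hτ : 0 < τ) (hσ : 0 < σ)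
    (hα : 32 * π ^ 2 * (1 - β / 4) < α) (M : ℝ) (hM : 0 < M) :
    ∃ u : R4 → ℝ, ContDiff ℝ (⊤ : ℕ∞) u ∧ HasCompactSupport u ∧
      (∫⁻ x : R4,
        ENNReal.ofReal ((lapl u x) ^ 2 + τ * ‖gradient u x‖ ^ 2 + σ * (u x) ^ 2)) ≤ 1 ∧
      ENNReal.ofReal M
        < ∫⁻ x : R4, ENNReal.ofReal ((Real.exp (α * (u x) ^ 2) - 1) / ‖x‖ ^ β) := by
  obtain ⟨Φ, Φ1, Φ2, B, hB, hΦ, hd1, hd2, hneg, hpos, habs, hbd⟩ := exists_smooth_ramp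
  set K : ℝ := 49 * B ^ 2 * exp 2 + τ * B ^ 2 + σ with hK
  have hK0 : 0 < K := by positivity
  set C : ℝ := 2 * π ^ 2 * (7 + K / 2) with hC
  have hC0 : 0 < C := by positivity
  have hα0 : 0 < α := by
    have : 0 < 1 - β / 4 := by linarith
    exact lt_trans (by positivity) hα
  obtain ⟨L, hL, hLM⟩ := exists_large (M := M) hβ4 hC0 hα
  set d : ℝ := exp (-L) ^ 2 with hd
  have hd0 : 0 < d := by positivity
  have hlogd : Real.log d = -2 * L := by
    rw [hd, Real.log_pow, Real.log_exp]; push_cast; ring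
  have hdle : d ≤ 1 := pow_le_one₀ (by positivity) (Real.exp_le_one_iff.2 (by linarith))
  -- `E` bounds the energy of the unnormalized function; `c` normalizes it to energy at most one.
  set E : ℝ := 8 * π ^ 2 * L + C with hE
  have hE0 : 0 < E := by positivity
  set c : ℝ := (√E)⁻¹ with hc
  have hc2 : c ^ 2 = E⁻¹ := by rw [hc, inv_pow, Real.sq_sqrt hE0.le]
  let T : ℝ → ℝ := fun s => -(1 / 2) * Real.log (s + d)
  let F : ℝ → ℝ := fun s => c * Φ (T s)
  let F1 : ℝ → ℝ := fun s => c * (Φ1 (T s) * (-(1 / 2) * (1 / (s + d))))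
  let F2 : ℝ → ℝ := fun s =>
    c * (Φ2 (T s) * (1 / (4 * (s + d) ^ 2)) + Φ1 (T s) * (1 / (2 * (s + d) ^ 2)))
  have hT : ∀ s, 0 ≤ s → HasDerivAt T (-(1 / 2) * (1 / (s + d))) s := fun s hs =>
    (((hasDerivAt_id s).add_const d).log (by simp; positivity)).const_mul _
  have hF1 : ∀ s, 0 ≤ s → HasDerivAt F (F1 s) s := fun s hs =>
    ((hd1 (T s)).comp s (hT s hs)).const_mul c
  have hF2 : ∀ s, 0 ≤ s → HasDerivAt F1 (F2 s) s := by
    intro s hs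
    have hne : s + d ≠ 0 := by positivity
    have h1 : HasDerivAt (fun s => -(1 / 2) * (1 / (s + d))) (1 / (2 * (s + d) ^ 2)) s := by
      have := ((hasDerivAt_const s (1:ℝ)).div ((hasDerivAt_id s).add_const d) hne).const_mul
        (-(1 / 2))
      refine this.congr_deriv ?_
      simp
      field_simp
    refine ((((hd2 (T s)).comp s (hT s hs)).mul h1).const_mul c).congr_deriv ?_
    simp only [F2, Function.comp]
    field_simp
    ring
  refine ⟨fun x => F (‖x‖ ^ 2), ?_, ?_, ?_, ?_⟩
  · refine contDiff_const.mul (hΦ.comp (contDiff_const.mul (ContDiff.log ?_ fun x => ?_)))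
    · exact (contDiff_norm_sq ℝ).add contDiff_const
    · positivity
  · refine HasCompactSupport.intro (isCompact_closedBall (0 : R4) 1) fun x hx => ?_
    have hx1 : 1 < ‖x‖ := by simpa using hx
    have : 0 < Real.log (‖x‖ ^ 2 + d) := Real.log_pos (by nlinarith)
    have : T (‖x‖ ^ 2) < 0 := by simp only [T]; linarith
    simp [F, (hneg _ this).1]
  · have hpt : ∀ x : R4, (lapl (fun x => F (‖x‖ ^ 2)) x) ^ 2
        + τ * ‖gradient (fun x : R4 => F (‖x‖ ^ 2)) x‖ ^ 2 + σ * F (‖x‖ ^ 2) ^ 2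
        ≤ c ^ 2 * (Set.Iic 1).indicator (fun r => majorant K d (r ^ 2 + d)) ‖x‖ := by
      intro x
      rw [lapl_radial hF1 hF2, norm_gradient_radial hF1]
      set s := ‖x‖ ^ 2 with hs
      have hs0 : 0 ≤ s := by positivity
      have hy0 : 0 < s + d := by positivity
      have hrw : (4 * s * F2 s + 8 * F1 s) ^ 2 + τ * (4 * s * F1 s ^ 2) + σ * F s ^ 2
          = c ^ 2 * ((s * (Φ2 (T s) + 2 * Φ1 (T s)) / (s + d) ^ 2 - 4 * Φ1 (T s) / (s + d)) ^ 2
            + τ * (s * Φ1 (T s) ^ 2 / (s + d) ^ 2) + σ * Φ (T s) ^ 2) := by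
        simp only [F, F1, F2]
        field_simp
        ring
      rw [hrw]
      refine mul_le_mul_of_nonneg_left ?_ (sq_nonneg c)
      have hmaj : 0 ≤ majorant K d (s + d) := by unfold majorant; positivity
      rcases le_or_gt (s + d) 1 with h | h
      · have hx1 : ‖x‖ ≤ 1 := by
          rw [← sq_le_one_iff₀ (norm_nonneg x)]; linarith
        rw [Set.indicator_of_mem (by exact hx1)]
        have hT0 : 0 ≤ T s := by
          have := Real.log_nonpos hy0.le h
          simp only [T]; linarith
        exact density_le hτ hσ hB hd0 hs0 rfl h rfl (fun ht => (hpos _ ht).2)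
          (fun ht => hbd _ hT0 ht) (habs _)
      · have ht : T s < 0 := by
          have := Real.log_pos h
          simp only [T]; linarith
        obtain ⟨h0, h1, h2⟩ := hneg _ ht
        rw [h0, h1, h2]
        simp only [Set.indicator]
        split_ifs
        · simpa using hmaj
        · simp
    calc _ ≤ ∫⁻ x : R4, ENNReal.ofReal (c ^ 2) * ENNReal.ofReal
            ((Set.Iic 1).indicator (fun r => majorant K d (r ^ 2 + d)) ‖x‖) := by
          refine lintegral_mono fun x => ?_
          rw [← ENNReal.ofReal_mul (sq_nonneg c)]
          exact ENNReal.ofReal_le_ofReal (hpt x)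
      _ ≤ ENNReal.ofReal (c ^ 2) * ENNReal.ofReal (2 * π ^ 2 * (-2 * Real.log d + 7 + K / 2)) := by
          rw [lintegral_const_mul' _ _ ENNReal.ofReal_ne_top]
          gcongr
          exact lintegral_majorant_le hK0.le hd0 hdle
      _ = 1 := by
          have : 2 * π ^ 2 * (-2 * Real.log d + 7 + K / 2) = E := by
            rw [hlogd, hE, hC]; ring
          rw [this, ← ENNReal.ofReal_mul (sq_nonneg c), hc2, inv_mul_cancel₀ hE0.ne',
            ENNReal.ofReal_one]
  · set A : ℝ := (exp (α * ((L - 1) ^ 2 / E)) - 1) * exp (β * L) with hA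
    have hA0 : 0 ≤ A := by
      have : 1 ≤ exp (α * ((L - 1) ^ 2 / E)) := Real.one_le_exp (by positivity)
      exact mul_nonneg (by linarith) (exp_pos _).le
    -- The origin is removed because there `‖x‖ ^ β = 0` and the quotient is a junk value when `β > 0`.
    have hms : MeasurableSet (Metric.ball (0 : R4) (exp (-L)) \ {0}) :=
      measurableSet_ball.diff (measurableSet_singleton 0)
    calc ENNReal.ofReal M
        < ENNReal.ofReal (A * (exp (-L) ^ 4 * (π ^ 2 / 2))) :=
          (ENNReal.ofReal_lt_ofReal_iff (hM.trans hLM)).2 hLM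
      _ = ∫⁻ _ in Metric.ball (0 : R4) (exp (-L)) \ {0}, ENNReal.ofReal A := by
          rw [setLIntegral_const, measure_sdiff_null (by simp),
            volume_ball_R4 _ (exp_pos _).le, ENNReal.ofReal_mul hA0]
      _ ≤ ∫⁻ x in Metric.ball (0 : R4) (exp (-L)) \ {0},
            ENNReal.ofReal ((exp (α * F (‖x‖ ^ 2) ^ 2) - 1) / ‖x‖ ^ β) := by
          refine setLIntegral_mono' hms fun x hx => ENNReal.ofReal_le_ofReal ?_
          have hx1 : ‖x‖ < exp (-L) := by simpa using hx.1
          have hx0 : 0 < ‖x‖ := norm_pos_iff.2 hx.2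
          have hy2 : ‖x‖ ^ 2 + d ≤ 2 * d := by
            have : ‖x‖ ^ 2 ≤ d := by rw [hd]; gcongr
            linarith
          have hlog : Real.log (‖x‖ ^ 2 + d) ≤ 1 - 2 * L := by
            have h1 := Real.log_le_log (by positivity) hy2
            rw [Real.log_mul two_ne_zero hd0.ne', hlogd] at h1
            linarith [Real.log_two_lt_d9]
          have hTL : L - 1 ≤ T (‖x‖ ^ 2) := by simp only [T]; linarith
          have hF : (L - 1) ^ 2 / E ≤ F (‖x‖ ^ 2) ^ 2 := by
            simp only [F]
            rw [(hpos (T (‖x‖ ^ 2)) (by linarith)).1, mul_pow, hc2, div_eq_inv_mul]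
            have : 0 ≤ L - 1 := by linarith
            gcongr
          have hw : exp (β * L) ≤ 1 / ‖x‖ ^ β := by
            rw [le_div_iff₀ (by positivity)]
            calc exp (β * L) * ‖x‖ ^ β ≤ exp (β * L) * exp (-L) ^ β := by gcongr
              _ = 1 := by rw [← Real.exp_mul, ← Real.exp_add]; simp; ring
          rw [hA, div_eq_mul_one_div (exp (α * F (‖x‖ ^ 2) ^ 2) - 1)]
          have h1 : 1 ≤ exp (α * ((L - 1) ^ 2 / E)) := Real.one_le_exp (by positivity)
          have h2 : exp (α * ((L - 1) ^ 2 / E)) ≤ exp (α * F (‖x‖ ^ 2) ^ 2) := by gcongr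
          exact mul_le_mul (by linarith) hw (exp_pos _).le (by linarith)
      _ ≤ _ := setLIntegral_le_lintegral _ _
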